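/- For 0 ≤ i, j ≤ d: Σ_{h=0}^d u_i(θ_{t+h})u_j(θ_{t+h})k*_h(W) = δ_{ij}·ν(W)·(k_i(W))^{−1}, and Σ_{h=0}^d u_h(θ_{t+i})u_h(θ_{t+j})k_h(W) = δ_{ij}·ν(W)·(k*_i(W))^{−1}. -/

import Mathlib

open Matrix
open scoped Classical

noncomputable section

/-- The full setup: a `Q`-polynomial distance-regular graph `Γ = (X,R)` of diameter `D ≥ 3`,
with adjacency matrix `A`, primitive idempotents `E_i`, eigenvalues `θ_i`,
Krein parameters `q^h_{ij}`, a fixed base vertex `x`, dual primitive idempotents `E*_i`,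
dual adjacency matrix `A*` and dual eigenvalues `θ*_i`. -/
structure TSetup (X : Type*) [Fintype X] [DecidableEq X] where
  G : SimpleGraph X
  hGconn : G.Connected
  D : ℕ
  hD3 : 3 ≤ D
  hDiamLe : ∀ y z : X, G.dist y z ≤ D
  hDiamEq : ∃ y z : X, G.dist y z = D
  p : ℕ → ℕ → ℕ → ℕ
  hDRG : ∀ h i j : ℕ, h ≤ D → i ≤ D → j ≤ D → ∀ y z : X, G.dist y z = h →
    Nat.card {w : X // G.dist y w = i ∧ G.dist z w = j} = p h i j
  A : Matrix X X ℂ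
  hA : ∀ y z : X, A y z = if G.Adj y z then 1 else 0
  E : ℕ → Matrix X X ℂ
  hEzero : ∀ i : ℕ, D < i → E i = 0
  hEsum : ∑ i ∈ Finset.range (D + 1), E i = 1
  hEidem : ∀ i j : ℕ, i ≤ D → j ≤ D → E i * E j = if i = j then E i else 0
  hEsymm : ∀ i : ℕ, (E i)ᵀ = E i
  hEreal : ∀ i : ℕ, (E i).map (starRingEnd ℂ) = E i
  hE0 : E 0 = (Fintype.card X : ℂ)⁻¹ • Matrix.of (fun _ _ => (1 : ℂ))
  θ : ℕ → ℝ
  hθinj : ∀ i j : ℕ, i ≤ D → j ≤ D → θ i = θ j → i = j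
  hAspec : A = ∑ i ∈ Finset.range (D + 1), (θ i : ℂ) • E i
  q : ℕ → ℕ → ℕ → ℝ
  hKrein : ∀ i j : ℕ, i ≤ D → j ≤ D →
    Matrix.hadamard (E i) (E j) =
      (Fintype.card X : ℂ)⁻¹ • ∑ h ∈ Finset.range (D + 1), (q h i j : ℂ) • E h
  hQpoly0 : ∀ h i j : ℕ, h ≤ D → i ≤ D → j ≤ D →
    (i + j < h ∨ h + j < i ∨ h + i < j) → q h i j = 0
  hQpoly1 : ∀ h i j : ℕ, h ≤ D → i ≤ D → j ≤ D →
    (h = i + j ∨ i = h + j ∨ j = h + i) → q h i j ≠ 0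
  x : X
  Estar : ℕ → Matrix X X ℂ
  hEstarzero : ∀ i : ℕ, D < i → Estar i = 0
  hEstar : ∀ i : ℕ, i ≤ D → ∀ y z : X,
    Estar i y z = if y = z ∧ G.dist x y = i then 1 else 0
  Astar : Matrix X X ℂ
  hAstar : ∀ y z : X, Astar y z = if y = z then (Fintype.card X : ℂ) * E 1 x y else 0
  θstar : ℕ → ℝ
  hθstarinj : ∀ i j : ℕ, i ≤ D → j ≤ D → θstar i = θstar j → i = j
  hAstarspec : Astar = ∑ i ∈ Finset.range (D + 1), (θstar i : ℂ) • Estar i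

variable {X : Type*} [Fintype X] [DecidableEq X]

/-- The Terwilliger algebra `T = T(x)`, generated by `A` and `A*`. -/
def TSetup.T (S : TSetup X) : Subalgebra ℂ (Matrix X X ℂ) :=
  Algebra.adjoin ℂ {S.A, S.Astar}

/-- A thin irreducible `T`-module `W` with endpoint `r`, dual endpoint `t` and diameter `d`,
where `E*_i W ≠ 0` iff `r ≤ i ≤ r + d` and `E_i W ≠ 0` iff `t ≤ i ≤ t + d`. -/
structure TMod (S : TSetup X) where
  W : Submodule ℂ (X → ℂ)
  hWinv : ∀ B ∈ S.T, ∀ w ∈ W, B *ᵥ w ∈ W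
  hWne : W ≠ ⊥
  hWirr : ∀ U : Submodule ℂ (X → ℂ), U ≤ W →
    (∀ B ∈ S.T, ∀ w ∈ U, B *ᵥ w ∈ U) → U = ⊥ ∨ U = W
  hthin : ∀ i : ℕ, Module.finrank ℂ (W.map (S.Estar i).mulVecLin) ≤ 1
  r : ℕ
  t : ℕ
  d : ℕ
  hr : ∀ i : ℕ, W.map (S.Estar i).mulVecLin ≠ ⊥ ↔ r ≤ i ∧ i ≤ r + d
  ht : ∀ i : ℕ, W.map (S.E i).mulVecLin ≠ ⊥ ↔ t ≤ i ∧ i ≤ t + d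

open Classical in
/-- The action of a matrix `B` on `W` (the restriction of `B` to `W`; defined to be `0`
if `B` does not leave `W` invariant). -/
def actW (S : TSetup X) (M : TMod S) (B : Matrix X X ℂ) : M.W →ₗ[ℂ] M.W :=
  if h : ∀ w ∈ M.W, B.mulVecLin w ∈ M.W then B.mulVecLin.restrict h else 0

/-- `tr_W(B)`: the trace of the action of `B` on `W`. -/
def trW (S : TSetup X) (M : TMod S) (B : Matrix X X ℂ) : ℂ :=
  LinearMap.trace ℂ M.W (actW S M B)

/-- `a_i(W) = tr_W(E*_{r+i} A)`. -/
def aW (S : TSetup X) (M : TMod S) (i : ℕ) : ℂ :=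
  trW S M (S.Estar (M.r + i) * S.A)

/-- `x_i(W) = tr_W(E*_{r+i} A E*_{r+i-1} A)`, with `x_0(W) = 0`. -/
def xW (S : TSetup X) (M : TMod S) (i : ℕ) : ℂ :=
  if i = 0 then 0 else trW S M (S.Estar (M.r + i) * S.A * S.Estar (M.r + i - 1) * S.A)

/-- `a*_i(W) = tr_W(E_{t+i} A*)`. -/
def astarW (S : TSetup X) (M : TMod S) (i : ℕ) : ℂ :=
  trW S M (S.E (M.t + i) * S.Astar)

/-- `x*_i(W) = tr_W(E_{t+i} A* E_{t+i-1} A*)`, with `x*_0(W) = 0`. -/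
def xstarW (S : TSetup X) (M : TMod S) (i : ℕ) : ℂ :=
  if i = 0 then 0 else trW S M (S.E (M.t + i) * S.Astar * S.E (M.t + i - 1) * S.Astar)

/-- The polynomials `p_i`: `p_0 = 1`, `p_{-1} = 0`,
`λ p_i = p_{i+1} + a_i(W) p_i + x_i(W) p_{i-1}`. -/
def pW (S : TSetup X) (M : TMod S) : ℕ → Polynomial ℂ
  | 0 => 1
  | 1 => Polynomial.X - Polynomial.C (aW S M 0)
  | (n + 2) =>
      (Polynomial.X - Polynomial.C (aW S M (n + 1))) * pW S M (n + 1)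
        - Polynomial.C (xW S M (n + 1)) * pW S M n

/-- The polynomials `p*_i`: `p*_0 = 1`, `p*_{-1} = 0`,
`λ p*_i = p*_{i+1} + a*_i(W) p*_i + x*_i(W) p*_{i-1}`. -/
def pstarW (S : TSetup X) (M : TMod S) : ℕ → Polynomial ℂ
  | 0 => 1
  | 1 => Polynomial.X - Polynomial.C (astarW S M 0)
  | (n + 2) =>
      (Polynomial.X - Polynomial.C (astarW S M (n + 1))) * pstarW S M (n + 1)
        - Polynomial.C (xstarW S M (n + 1)) * pstarW S M n

/-- The Hermitian inner product `⟨u,v⟩ = Σ_y u_y conj(v_y)` on `ℂ^X`. -/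
def herm (u v : X → ℂ) : ℂ := ∑ y, u y * (starRingEnd ℂ) (v y)

/-- `ν(W)`, the multiplicative inverse of `m_0(W) = tr_W(E_t E*_r)`. -/
def nuW (S : TSetup X) (M : TMod S) : ℂ :=
  (trW S M (S.E M.t * S.Estar M.r))⁻¹

/-- `k_i(W) = ν(W) m*_i(W)` where `m*_i(W) = tr_W(E*_{r+i} E_t)`. -/
def kW (S : TSetup X) (M : TMod S) (i : ℕ) : ℂ :=
  nuW S M * trW S M (S.Estar (M.r + i) * S.E M.t)

/-- `k*_i(W) = ν(W) m_i(W)` where `m_i(W) = tr_W(E_{t+i} E*_r)`. -/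
def kstarW (S : TSetup X) (M : TMod S) (i : ℕ) : ℂ :=
  nuW S M * trW S M (S.E (M.t + i) * S.Estar M.r)

/-!
On a thin irreducible `T`-module `W` the pair `A`, `A*` acts as a Leonard system: `A` is diagonal
in a basis adapted to the lines `E_{t+h} W` and irreducible tridiagonal in a basis adapted to the
lines `E*_{r+i} W`, while `A*` behaves the other way around. (`A*` is tridiagonal because the Krein
parameters `q^1_{ij}` with `|i - j| > 1` vanish.) Let `Y` be the transition matrix between the two
bases and `Z` its inverse. The columns of `Y` and the rows of `Z` are right and left eigenvectors of
the tridiagonal matrix of `A`, so the three-term recurrence yields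
`u_i(θ_{t+h}) = Y_{ih} Y_{00} / (Y_{0h} Y_{i0}) = Z_{hi} Z_{00} / (Z_{h0} Z_{0i})`.
The scalars `ν`, `k_i`, `k*_h` are traces of products of two rank one idempotents, hence monomials
in entries of `Y` and `Z`. Using the first formula for one factor and the second for the other, the
two orthogonality relations become `Y Z = 1` and `Z Y = 1`.
-/

section Tridiagonal

open Polynomial

variable {R : Type*}

/-- The monic polynomials `p_n` of a three-term recurrence: `p_0 = 1`, `p_{-1} = 0` and
`λ p_n = p_{n+1} + a_n p_n + x_n p_{n-1}`. -/
def threeTermPoly [CommRing R] (a x : ℕ → R) : ℕ → R[X]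
  | 0 => 1
  | 1 => Polynomial.X - C (a 0)
  | n + 2 =>
      (Polynomial.X - C (a (n + 1))) * threeTermPoly a x (n + 1)
        - C (x (n + 1)) * threeTermPoly a x n

/-- A tridiagonal square matrix. -/
def IsTridiagonal [Zero R] {n : ℕ} (M : Matrix (Fin n) (Fin n) R) : Prop :=
  ∀ i j : Fin n, (i : ℕ) + 1 < j ∨ (j : ℕ) + 1 < i → M i j = 0

/-- A tridiagonal matrix is irreducible if its superdiagonal and subdiagonal entries are nonzero.
The size is written `d + 1` so that `k : Fin d` indexes both off-diagonals. -/
structure IsIrreducibleTridiagonal [Zero R] {d : ℕ} (M : Matrix (Fin (d + 1)) (Fin (d + 1)) R) :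
    Prop where
  isTridiagonal : IsTridiagonal M
  superdiag_ne_zero (k : Fin d) : M k.castSucc k.succ ≠ 0
  subdiag_ne_zero (k : Fin d) : M k.succ k.castSucc ≠ 0

lemma IsIrreducibleTridiagonal.transpose [Zero R] {d : ℕ}
    {M : Matrix (Fin (d + 1)) (Fin (d + 1)) R} (hM : IsIrreducibleTridiagonal M) :
    IsIrreducibleTridiagonal Mᵀ where
  isTridiagonal i j hij := hM.isTridiagonal j i hij.symm
  superdiag_ne_zero := hM.subdiag_ne_zero
  subdiag_ne_zero := hM.superdiag_ne_zero

namespace IsTridiagonal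

variable [CommRing R]

lemma mulVec_apply_zero {n : ℕ} {M : Matrix (Fin n) (Fin n) R} (hM : IsTridiagonal M)
    (y : Fin n → R) (hn : 1 < n) :
    (M *ᵥ y) ⟨0, by omega⟩ =
      M ⟨0, by omega⟩ ⟨0, by omega⟩ * y ⟨0, by omega⟩ + M ⟨0, by omega⟩ ⟨1, hn⟩ * y ⟨1, hn⟩ := by
  rw [Matrix.mulVec, dotProduct,
    ← Finset.sum_subset (Finset.subset_univ {⟨0, by omega⟩, ⟨1, hn⟩}), Finset.sum_pair (by simp)]
  intro j _ hj
  simp only [Finset.mem_insert, Finset.mem_singleton, Fin.ext_iff] at hj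
  rw [hM _ _ (Or.inl (show 0 + 1 < (j : ℕ) by omega)), zero_mul]

lemma mulVec_apply_succ {n : ℕ} {M : Matrix (Fin n) (Fin n) R} (hM : IsTridiagonal M)
    (y : Fin n → R) (k : ℕ) (hk : k + 2 < n) :
    (M *ᵥ y) ⟨k + 1, by omega⟩ =
      M ⟨k + 1, by omega⟩ ⟨k, by omega⟩ * y ⟨k, by omega⟩
        + M ⟨k + 1, by omega⟩ ⟨k + 1, by omega⟩ * y ⟨k + 1, by omega⟩
        + M ⟨k + 1, by omega⟩ ⟨k + 2, hk⟩ * y ⟨k + 2, hk⟩ := by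
  rw [Matrix.mulVec, dotProduct,
    ← Finset.sum_subset (Finset.subset_univ {⟨k, by omega⟩, ⟨k + 1, by omega⟩, ⟨k + 2, hk⟩}),
    Finset.sum_insert (by simp), Finset.sum_pair (by simp), add_assoc]
  intro j _ hj
  simp only [Finset.mem_insert, Finset.mem_singleton, Fin.ext_iff] at hj
  rw [hM _ _ (show k + 1 + 1 < (j : ℕ) ∨ (j : ℕ) + 1 < k + 1 by omega), zero_mul]

variable {d : ℕ} {M : Matrix (Fin (d + 1)) (Fin (d + 1)) R} {a x : ℕ → R}

theorem eval_threeTermPoly_mul (hM : IsTridiagonal M) (ha : ∀ i : Fin (d + 1), a i = M i i)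
    (hx : ∀ k : Fin d, x (k + 1) = M k.succ k.castSucc * M k.castSucc k.succ)
    {θ : R} {y : Fin (d + 1) → R} (hy : M *ᵥ y = θ • y) (i : Fin (d + 1)) :
    (threeTermPoly a x i).eval θ * y 0 =
      Fin.partialProd (fun k : Fin d => M k.castSucc k.succ) i * y i := by
  obtain ⟨n, hn⟩ := i
  have superdiag_succ (k : ℕ) (hk : k < d) := Fin.partialProd_succ
    (fun k : Fin d => M k.castSucc k.succ) ⟨k, hk⟩
  simp only [Fin.succ_mk, Fin.castSucc_mk] at superdiag_succ
  induction n using Nat.twoStepInduction with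
  | zero => simp [threeTermPoly]
  | one =>
    have row := congrFun hy ⟨0, by omega⟩
    rw [hM.mulVec_apply_zero y hn] at row
    have ha₀ := ha ⟨0, by omega⟩
    rw [superdiag_succ 0 (by omega)]
    simp only [threeTermPoly, eval_sub, eval_X, eval_C, Pi.smul_apply, smul_eq_mul, Fin.mk_zero',
      Fin.partialProd_zero, one_mul] at row ha₀ ⊢
    rw [ha₀]
    linear_combination -row
  | more n ih₀ ih₁ =>
    have row := congrFun hy ⟨n + 1, by omega⟩
    rw [hM.mulVec_apply_succ y n hn, Pi.smul_apply, smul_eq_mul] at row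
    have ha₁ := ha ⟨n + 1, by omega⟩
    have hx₁ := hx ⟨n, by omega⟩
    specialize ih₀ (by omega)
    specialize ih₁ (by omega)
    rw [superdiag_succ n (by omega)] at ih₁
    rw [superdiag_succ (n + 1) (by omega), superdiag_succ n (by omega)]
    simp only [threeTermPoly, eval_sub, eval_mul, eval_X, eval_C, Fin.succ_mk, Fin.castSucc_mk]
      at ih₀ ih₁ ha₁ hx₁ ⊢
    rw [ha₁, hx₁]
    set c := Fin.partialProd (fun k : Fin d => M k.castSucc k.succ) ⟨n, by omega⟩
    linear_combination (θ - M ⟨n + 1, by omega⟩ ⟨n + 1, by omega⟩) * ih₁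
      - M ⟨n + 1, by omega⟩ ⟨n, by omega⟩ * M ⟨n, by omega⟩ ⟨n + 1, by omega⟩ * ih₀
      - c * M ⟨n, by omega⟩ ⟨n + 1, by omega⟩ * row

end IsTridiagonal

namespace IsIrreducibleTridiagonal

section IsDomain

variable [CommRing R] [IsDomain R] {d : ℕ} {M : Matrix (Fin (d + 1)) (Fin (d + 1)) R} {θ : R}
  {y : Fin (d + 1) → R}

lemma partialProd_superdiag_ne_zero (hM : IsIrreducibleTridiagonal M) (i : Fin (d + 1)) :
    Fin.partialProd (fun k : Fin d => M k.castSucc k.succ) i ≠ 0 := by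
  induction i using Fin.induction with
  | zero => simp
  | succ k ih => rw [Fin.partialProd_succ]; exact mul_ne_zero ih (hM.superdiag_ne_zero k)

lemma apply_zero_ne_zero_of_mulVec_eq (hM : IsIrreducibleTridiagonal M) (hy : M *ᵥ y = θ • y)
    (hy_ne : y ≠ 0) : y 0 ≠ 0 := by
  contrapose! hy_ne with hy₀
  ext i
  induction i using WellFoundedLT.induction with
  | ind i ih =>
    obtain rfl | ⟨k, rfl⟩ := i.eq_zero_or_eq_succ
    · exact hy₀
    have row : M k.castSucc k.succ * y k.succ = 0 := by
      have row := congrFun hy k.castSucc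
      rw [Pi.smul_apply, ih k.castSucc k.castSucc_lt_succ, Pi.zero_apply, smul_zero, Matrix.mulVec,
        dotProduct, Finset.sum_eq_single k.succ _ (by simp)] at row
      · exact row
      intro j _ hj
      obtain hj | hj := lt_or_gt_of_ne hj
      · rw [ih j hj, Pi.zero_apply, mul_zero]
      · rw [hM.isTridiagonal k.castSucc j (Or.inl hj), zero_mul]
    exact (mul_eq_zero.1 row).resolve_left (hM.superdiag_ne_zero k)

end IsDomain

section Field

variable {K : Type*} [Field K] {d : ℕ} {M : Matrix (Fin (d + 1)) (Fin (d + 1)) K} {a x : ℕ → K}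
  {θ θ' : K} {y z : Fin (d + 1) → K}

theorem eval_threeTermPoly_div (hM : IsIrreducibleTridiagonal M)
    (ha : ∀ i : Fin (d + 1), a i = M i i)
    (hx : ∀ k : Fin d, x (k + 1) = M k.succ k.castSucc * M k.castSucc k.succ)
    (hy : M *ᵥ y = θ • y) (hz : M *ᵥ z = θ' • z) (hy₀ : y 0 ≠ 0) {i : Fin (d + 1)}
    (hzi : z i ≠ 0) :
    (threeTermPoly a x i).eval θ / (threeTermPoly a x i).eval θ' =
      y i * z 0 / (y 0 * z i) := by
  have hpy := hM.isTridiagonal.eval_threeTermPoly_mul ha hx hy i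
  have hpz := hM.isTridiagonal.eval_threeTermPoly_mul ha hx hz i
  have hc := hM.partialProd_superdiag_ne_zero i
  have hp : (threeTermPoly a x i).eval θ' ≠ 0 :=
    left_ne_zero_of_mul (hpz.trans_ne (mul_ne_zero hc hzi))
  rw [div_eq_div_iff hp (mul_ne_zero hy₀ hzi)]
  linear_combination z i * hpy - y i * hpz

end Field

end IsIrreducibleTridiagonal

end Tridiagonal

section CoordProj

open Module

variable {R V ι κ : Type*} [CommRing R] [AddCommGroup V] [Module R V]

/-- The rank one idempotent of a basis `b` that fixes `b i` and kills the other basis vectors. -/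
def coordProj (b : Basis ι R V) (i : ι) : End R V := (b.coord i).smulRight (b i)

lemma coordProj_apply (b : Basis ι R V) (i : ι) (v : V) :
    coordProj b i v = b.repr v i • b i := rfl

lemma apply_basis_eq_smul_of_mul_coordProj {b : Basis ι R V} {i : ι} {f : End R V} {c : R}
    (h : f * coordProj b i = c • coordProj b i) : f (b i) = c • b i := by
  simpa [coordProj_apply] using LinearMap.congr_fun h (b i)

lemma trace_coordProj_mul [Fintype ι] [DecidableEq ι] (b : Basis ι R V) (i : ι) (f : End R V) :
    LinearMap.trace R V (coordProj b i * f) = LinearMap.toMatrix b b f i i := by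
  have := Module.Free.of_basis b
  have := Module.Finite.of_basis b
  rw [LinearMap.toMatrix_apply]
  exact LinearMap.trace_smulRight (b.coord i ∘ₗ f) (b i)

lemma trace_coordProj_mul_mul_coordProj_mul [Fintype ι] [DecidableEq ι] (b : Basis ι R V)
    (i j : ι) (f g : End R V) :
    LinearMap.trace R V (coordProj b i * f * coordProj b j * g) =
      LinearMap.toMatrix b b f i j * LinearMap.toMatrix b b g j i := by
  rw [mul_assoc, mul_assoc, trace_coordProj_mul]
  simp [LinearMap.toMatrix_apply, coordProj_apply, mul_comm]

lemma trace_coordProj_mul_coordProj [Finite ι] (b : Basis ι R V) (c : Basis κ R V) (i : ι) (j : κ) :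
    LinearMap.trace R V (coordProj b i * coordProj c j) =
      b.toMatrix c i j * c.toMatrix b j i := by
  classical
  have := Fintype.ofFinite ι
  rw [trace_coordProj_mul]
  simp [LinearMap.toMatrix_apply, Basis.toMatrix_apply, coordProj_apply, mul_comm]

lemma toMatrix_apply_eq_zero_of_coordProj_mul [Fintype ι] [DecidableEq ι] {b : Basis ι R V}
    {i j : ι} {f : End R V} (h : coordProj b i * f * coordProj b j = 0) :
    LinearMap.toMatrix b b f i j = 0 := by
  have repr_eq := congrArg (b.repr · i) (LinearMap.congr_fun h (b j))
  simpa [coordProj_apply, LinearMap.toMatrix_apply] using repr_eq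

end CoordProj

section Leonard

open Module

/-- A Leonard system of diameter `d`, recorded through eigenbases: `A` is diagonal in `basisE` and
irreducible tridiagonal in `basisEstar`, and `Astar` the other way around. The primitive
idempotents are recovered as `coordProj basisE` and `coordProj basisEstar`. Distinctness of the
eigenvalues is automatic, since the eigenspaces of an irreducible tridiagonal matrix are lines. -/
structure LeonardSystem (K V : Type*) [Field K] [AddCommGroup V] [Module K V] (d : ℕ) where
  A : End K V
  Astar : End K V
  basisE : Basis (Fin (d + 1)) K V
  basisEstar : Basis (Fin (d + 1)) K V
  θ : Fin (d + 1) → K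
  θstar : Fin (d + 1) → K
  A_basisE (h : Fin (d + 1)) : A (basisE h) = θ h • basisE h
  Astar_basisEstar (i : Fin (d + 1)) : Astar (basisEstar i) = θstar i • basisEstar i
  toMatrix_A : IsIrreducibleTridiagonal (LinearMap.toMatrix basisEstar basisEstar A)
  toMatrix_Astar : IsIrreducibleTridiagonal (LinearMap.toMatrix basisE basisE Astar)

namespace LeonardSystem

variable {K V : Type*} [Field K] [AddCommGroup V] [Module K V] {d : ℕ} (L : LeonardSystem K V d)

/-- The dual Leonard system, in which the roles of `A` and `Astar` are exchanged. -/
def swap : LeonardSystem K V d where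
  A := L.Astar
  Astar := L.A
  basisE := L.basisEstar
  basisEstar := L.basisE
  θ := L.θstar
  θstar := L.θ
  A_basisE := L.Astar_basisEstar
  Astar_basisEstar := L.A_basisE
  toMatrix_A := L.toMatrix_Astar
  toMatrix_Astar := L.toMatrix_A

/-- The primitive idempotent `E_h` of `A`. -/
def E (h : Fin (d + 1)) : End K V := coordProj L.basisE h

/-- The primitive idempotent `E*_i` of `A*`. -/
def Estar (i : Fin (d + 1)) : End K V := coordProj L.basisEstar i

/-- The diagonal intersection number `a_i = tr(E*_i A)`. -/
def a (i : Fin (d + 1)) : K := LinearMap.trace K V (L.Estar i * L.A)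

/-- The intersection number `tr(E*_{k+1} A E*_k A)`; it is `x_{k+1}` in the usual indexing, which
starts at `x_1`. -/
def x (k : Fin d) : K := LinearMap.trace K V (L.Estar k.succ * L.A * L.Estar k.castSucc * L.A)

/-- The normalizing scalar `ν`, the inverse of `m_0 = tr(E_0 E*_0)`. -/
def ν : K := (LinearMap.trace K V (L.E 0 * L.Estar 0))⁻¹

/-- The valency-like scalar `k_i = ν tr(E*_i E_0)`. -/
def k (i : Fin (d + 1)) : K := L.ν * LinearMap.trace K V (L.Estar i * L.E 0)

/-- The multiplicity-like scalar `k*_h = ν tr(E_h E*_0)`. -/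
def kstar (h : Fin (d + 1)) : K := L.ν * LinearMap.trace K V (L.E h * L.Estar 0)

/-- The transition matrix whose `h`-th column holds the `basisEstar`-coordinates of `basisE h`. Its
inverse is `L.swap.transition`. -/
def transition : Matrix (Fin (d + 1)) (Fin (d + 1)) K := L.basisEstar.toMatrix L.basisE

lemma transition_mul_swap_transition : L.transition * L.swap.transition = 1 :=
  L.basisEstar.toMatrix_mul_toMatrix_flip L.basisE

lemma toMatrix_A_mulVec_transition_col (h : Fin (d + 1)) :
    LinearMap.toMatrix L.basisEstar L.basisEstar L.A *ᵥ L.transition.col h =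
      L.θ h • L.transition.col h := by
  change _ *ᵥ ⇑(L.basisEstar.repr (L.basisE h)) = L.θ h • ⇑(L.basisEstar.repr (L.basisE h))
  rw [LinearMap.toMatrix_mulVec_repr, L.A_basisE, map_smul, Finsupp.coe_smul]

lemma toMatrix_A_transpose_mulVec_swap_transition_row (h : Fin (d + 1)) :
    (LinearMap.toMatrix L.basisEstar L.basisEstar L.A)ᵀ *ᵥ L.swap.transition.row h =
      L.θ h • L.swap.transition.row h := by
  have diag : L.basisE.coord h ∘ₗ L.A = L.θ h • L.basisE.coord h :=
    L.basisE.ext fun j => by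
      obtain rfl | hj := eq_or_ne j h <;> simp [L.A_basisE, *]
  rw [Matrix.mulVec_transpose]
  ext i
  calc (L.swap.transition.row h ᵥ* LinearMap.toMatrix L.basisEstar L.basisEstar L.A) i
      = LinearMap.toMatrix L.basisEstar L.basisE L.A h i :=
        congrFun (congrFun (basis_toMatrix_mul_linearMap_toMatrix L.basisEstar L.basisE
          L.basisEstar L.A) h) i
    _ = L.basisE.coord h (L.A (L.basisEstar i)) := LinearMap.toMatrix_apply ..
    _ = L.θ h * L.swap.transition h i := LinearMap.congr_fun diag (L.basisEstar i)

lemma transition_zero_left_ne_zero (h : Fin (d + 1)) : L.transition 0 h ≠ 0 := by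
  refine L.toMatrix_A.apply_zero_ne_zero_of_mulVec_eq (L.toMatrix_A_mulVec_transition_col h) ?_
  intro hcol
  exact L.basisE.ne_zero h (L.basisEstar.repr.map_eq_zero_iff.1 (DFunLike.coe_injective hcol))

lemma transition_zero_right_ne_zero (i : Fin (d + 1)) : L.transition i 0 ≠ 0 := by
  refine L.swap.toMatrix_A.transpose.apply_zero_ne_zero_of_mulVec_eq
    (L.swap.toMatrix_A_transpose_mulVec_swap_transition_row i) ?_
  intro hrow
  have mul_apply_eq : (L.transition * L.swap.transition) i i = 0 := by
    rw [Matrix.mul_apply]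
    exact Finset.sum_eq_zero fun j _ => by rw [show L.transition i j = 0 from congrFun hrow j,
      zero_mul]
  rw [transition_mul_swap_transition, Matrix.one_apply_eq] at mul_apply_eq
  exact one_ne_zero mul_apply_eq

lemma ν_eq : L.ν = (L.transition 0 0 * L.swap.transition 0 0)⁻¹ := by
  rw [ν, E, Estar, trace_coordProj_mul_coordProj, mul_comm]; rfl

lemma ν_ne_zero : L.ν ≠ 0 := by
  rw [ν_eq]
  exact inv_ne_zero (mul_ne_zero (L.transition_zero_left_ne_zero 0)
    (L.swap.transition_zero_left_ne_zero 0))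

lemma k_eq (i : Fin (d + 1)) : L.k i = L.ν * (L.transition i 0 * L.swap.transition 0 i) := by
  rw [k, E, Estar, trace_coordProj_mul_coordProj]; rfl

lemma kstar_eq (h : Fin (d + 1)) :
    L.kstar h = L.ν * (L.transition 0 h * L.swap.transition h 0) := by
  rw [kstar, E, Estar, trace_coordProj_mul_coordProj, mul_comm (L.basisE.toMatrix _ _ _)]; rfl

lemma ν_mul_inv_k (i : Fin (d + 1)) :
    L.ν * (L.k i)⁻¹ = (L.transition i 0 * L.swap.transition 0 i)⁻¹ := by
  rw [k_eq, mul_inv L.ν, mul_inv_cancel_left₀ L.ν_ne_zero]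

lemma ν_mul_inv_kstar (h : Fin (d + 1)) :
    L.ν * (L.kstar h)⁻¹ = (L.transition 0 h * L.swap.transition h 0)⁻¹ := by
  rw [kstar_eq, mul_inv L.ν, mul_inv_cancel_left₀ L.ν_ne_zero]

section Orthogonality

variable {L} {a x : ℕ → K}

lemma eval_threeTermPoly_div_eq_transition (ha : ∀ i : Fin (d + 1), a i = L.a i)
    (hx : ∀ k : Fin d, x (k + 1) = L.x k) (i h : Fin (d + 1)) :
    (threeTermPoly a x i).eval (L.θ h) / (threeTermPoly a x i).eval (L.θ 0) =
      L.transition i h * L.transition 0 0 / (L.transition 0 h * L.transition i 0) := by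
  refine L.toMatrix_A.eval_threeTermPoly_div (fun i => ?_) (fun k => ?_)
    (L.toMatrix_A_mulVec_transition_col h) (L.toMatrix_A_mulVec_transition_col 0)
    (L.transition_zero_left_ne_zero h) (L.transition_zero_right_ne_zero i)
  · rw [ha, LeonardSystem.a, Estar, trace_coordProj_mul]
  · rw [hx, LeonardSystem.x, Estar, Estar, trace_coordProj_mul_mul_coordProj_mul]

lemma eval_threeTermPoly_div_eq_swap_transition (ha : ∀ i : Fin (d + 1), a i = L.a i)
    (hx : ∀ k : Fin d, x (k + 1) = L.x k) (i h : Fin (d + 1)) :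
    (threeTermPoly a x i).eval (L.θ h) / (threeTermPoly a x i).eval (L.θ 0) =
      L.swap.transition h i * L.swap.transition 0 0 /
        (L.swap.transition h 0 * L.swap.transition 0 i) := by
  refine L.toMatrix_A.transpose.eval_threeTermPoly_div (fun i => ?_) (fun k => ?_)
    (L.toMatrix_A_transpose_mulVec_swap_transition_row h)
    (L.toMatrix_A_transpose_mulVec_swap_transition_row 0)
    (L.swap.transition_zero_right_ne_zero h) (L.swap.transition_zero_left_ne_zero i)
  · rw [ha, LeonardSystem.a, Estar, trace_coordProj_mul, Matrix.transpose_apply]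
  · rw [hx, LeonardSystem.x, Estar, Estar, trace_coordProj_mul_mul_coordProj_mul, mul_comm]; rfl

theorem sum_eval_threeTermPoly_mul_kstar (ha : ∀ i : Fin (d + 1), a i = L.a i)
    (hx : ∀ k : Fin d, x (k + 1) = L.x k) (i j : Fin (d + 1)) :
    ∑ h, (threeTermPoly a x i).eval (L.θ h) / (threeTermPoly a x i).eval (L.θ 0) *
        ((threeTermPoly a x j).eval (L.θ h) / (threeTermPoly a x j).eval (L.θ 0)) * L.kstar h =
      (if i = j then 1 else 0) * L.ν * (L.k i)⁻¹ := by
  have summand (h : Fin (d + 1)) :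
      (threeTermPoly a x i).eval (L.θ h) / (threeTermPoly a x i).eval (L.θ 0) *
          ((threeTermPoly a x j).eval (L.θ h) / (threeTermPoly a x j).eval (L.θ 0)) * L.kstar h =
        L.transition i h * L.swap.transition h j *
          (L.transition i 0 * L.swap.transition 0 j)⁻¹ := by
    have := L.transition_zero_left_ne_zero
    have := L.swap.transition_zero_right_ne_zero
    rw [eval_threeTermPoly_div_eq_transition ha hx, eval_threeTermPoly_div_eq_swap_transition ha hx,
      kstar_eq, ν_eq]
    field_simp [*]
  rw [Finset.sum_congr rfl fun h _ => summand h, ← Finset.sum_mul, ← Matrix.mul_apply,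
    transition_mul_swap_transition, Matrix.one_apply, mul_assoc _ L.ν, ν_mul_inv_k]
  obtain rfl | hij := eq_or_ne i j <;> simp [*]

theorem sum_eval_threeTermPoly_mul_k (ha : ∀ i : Fin (d + 1), a i = L.a i)
    (hx : ∀ k : Fin d, x (k + 1) = L.x k) (i j : Fin (d + 1)) :
    ∑ h : Fin (d + 1),
        (threeTermPoly a x h).eval (L.θ i) / (threeTermPoly a x h).eval (L.θ 0) *
          ((threeTermPoly a x h).eval (L.θ j) / (threeTermPoly a x h).eval (L.θ 0)) * L.k h =
      (if i = j then 1 else 0) * L.ν * (L.kstar i)⁻¹ := by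
  have summand (h : Fin (d + 1)) :
      (threeTermPoly a x h).eval (L.θ i) / (threeTermPoly a x h).eval (L.θ 0) *
          ((threeTermPoly a x h).eval (L.θ j) / (threeTermPoly a x h).eval (L.θ 0)) * L.k h =
        L.swap.transition i h * L.transition h j *
          (L.transition 0 j * L.swap.transition i 0)⁻¹ := by
    have := L.transition_zero_left_ne_zero
    have := L.transition_zero_right_ne_zero
    have := L.swap.transition_zero_left_ne_zero
    have := L.swap.transition_zero_right_ne_zero
    rw [eval_threeTermPoly_div_eq_swap_transition ha hx h i,
      eval_threeTermPoly_div_eq_transition ha hx h j, k_eq, ν_eq]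
    field_simp [*]
  have swap_mul : L.swap.transition * L.transition = 1 := L.swap.transition_mul_swap_transition
  rw [Finset.sum_congr rfl fun h _ => summand h, ← Finset.sum_mul, ← Matrix.mul_apply,
    swap_mul, Matrix.one_apply, mul_assoc _ L.ν, ν_mul_inv_kstar]
  obtain rfl | hij := eq_or_ne i j <;> simp [*]

end Orthogonality

end LeonardSystem

end Leonard
section LinearAlgebra

open Module

section Idempotents

variable {ι : Type*} {s : Finset ι} {j : ι}

section CommRing

variable {R A : Type*} [CommRing R] [Ring A] [Algebra R A] {e : ι → A} {θ : ι → R}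

lemma sum_smul_mul_of_orthogonalIdempotents (he : OrthogonalIdempotents e) (hj : j ∈ s) :
    (∑ i ∈ s, θ i • e i) * e j = θ j • e j := by
  classical
  simp only [Finset.sum_mul, smul_mul_assoc, he.mul_eq, smul_ite, smul_zero, Finset.sum_ite_eq',
    hj, if_true]

lemma aeval_mul_of_mul_eq_smul {a b : A} {c : R} (hab : a * b = c • b) (p : Polynomial R) :
    Polynomial.aeval a p * b = p.eval c • b := by
  have pow_mul (n : ℕ) : a ^ n * b = c ^ n • b := by
    induction n with
    | zero => simp
    | succ n ih => rw [pow_succ, mul_assoc, hab, mul_smul_comm, ih, smul_smul, pow_succ']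
  induction p using Polynomial.induction_on' with
  | add p q hp hq => rw [map_add, add_mul, hp, hq, Polynomial.eval_add, add_smul]
  | monomial n r =>
    rw [Polynomial.aeval_monomial, mul_assoc, pow_mul, Polynomial.eval_monomial,
      ← Algebra.smul_def, smul_smul]

end CommRing

lemma mem_adjoin_sum_smul_of_orthogonalIdempotents {K A : Type*} [Field K] [Ring A] [Algebra K A]
    {e : ι → A} {θ : ι → K} (he : OrthogonalIdempotents e)
    (hsum : ∑ i ∈ s, e i = 1) (hθ : Set.InjOn θ s) (hj : j ∈ s) :
    e j ∈ Algebra.adjoin K {∑ i ∈ s, θ i • e i} := by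
  classical
  suffices Polynomial.aeval (∑ i ∈ s, θ i • e i) (Lagrange.basis s θ j) = e j from
    this ▸ Polynomial.aeval_mem_adjoin_singleton K _
  calc Polynomial.aeval (∑ i ∈ s, θ i • e i) (Lagrange.basis s θ j)
      = ∑ k ∈ s, Polynomial.aeval (∑ i ∈ s, θ i • e i) (Lagrange.basis s θ j) * e k := by
        rw [← Finset.mul_sum, hsum, mul_one]
    _ = ∑ k ∈ s, (Lagrange.basis s θ j).eval (θ k) • e k :=
        Finset.sum_congr rfl fun k hk =>
          aeval_mul_of_mul_eq_smul (sum_smul_mul_of_orthogonalIdempotents he hk) _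
    _ = (Lagrange.basis s θ j).eval (θ j) • e j :=
        Finset.sum_eq_single_of_mem j hj fun k hk hkj => by
          rw [Lagrange.eval_basis_of_ne hkj.symm hk, zero_smul]
    _ = e j := by rw [Lagrange.eval_basis_self hθ hj, one_smul]

end Idempotents

section Field

variable {K V ι : Type*} [Field K] [AddCommGroup V] [Module K V]

lemma finrank_le_card_of_sum_eq_one {s : Finset ι} {f : ι → End K V} (hf : ∑ i ∈ s, f i = 1)
    (hrank : ∀ i ∈ s, (f i).rank ≤ 1) : finrank K V ≤ s.card := by
  refine finrank_le_of_rank_le ?_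
  calc Module.rank K V = LinearMap.rank (1 : End K V) := by
        rw [LinearMap.rank, End.one_eq_id, LinearMap.range_id, rank_top]
    _ ≤ ∑ i ∈ s, (f i).rank := hf ▸ LinearMap.rank_finsetSum_le s f
    _ ≤ ∑ i ∈ s, 1 := Finset.sum_le_sum hrank
    _ = s.card := by simp

lemma exists_basis_eq_coordProj [Fintype ι] {e : ι → End K V} (he : OrthogonalIdempotents e)
    (hne : ∀ i, e i ≠ 0) [FiniteDimensional K V] (hrank : finrank K V ≤ Fintype.card ι) :
    ∃ b : Basis ι K V, ∀ i, e i = coordProj b i := by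
  classical
  choose v hv using fun i => DFunLike.ne_iff.1 (hne i)
  have apply_apply (i j : ι) : e i (e j (v j)) = if i = j then e i (v i) else 0 := by
    rw [← End.mul_apply, he.mul_eq]
    obtain rfl | hij := eq_or_ne i j <;> simp [*]
  have indep : LinearIndependent K fun i => e i (v i) := by
    rw [Fintype.linearIndependent_iff]
    intro c hc i
    have hci : c i • e i (v i) = 0 := by simpa [apply_apply] using congrArg (e i) hc
    exact (smul_eq_zero.1 hci).resolve_right (hv i)
  let b := basisOfLinearIndependentOfCardEqFinrank' _ indep
    (le_antisymm indep.fintype_card_le_finrank hrank)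
  refine ⟨b, fun i => b.ext fun j => ?_⟩
  have hb (j : ι) : b j = e j (v j) := by simp [b]
  rw [coordProj_apply, b.repr_self, hb, hb, apply_apply]
  obtain rfl | hij := eq_or_ne i j <;> simp [*]

end Field

section Nontrivial

variable {R V ι : Type*} [CommRing R] [Nontrivial R] [AddCommGroup V] [Module R V]

lemma exists_toMatrix_ne_zero_of_irreducible [Fintype ι] [DecidableEq ι]
    {b : Basis ι R V} {f g : End R V} {σ : ι → R} (hg : ∀ i, g (b i) = σ i • b i)
    (hirr : ∀ U ∈ f.invtSubmodule, U ∈ g.invtSubmodule → U = ⊥ ∨ U = ⊤)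
    {s : Set ι} (hs : s.Nonempty) (hsc : sᶜ.Nonempty) :
    ∃ i ∉ s, ∃ j ∈ s, LinearMap.toMatrix b b f i j ≠ 0 := by
  by_contra! hzero
  have mem_span (v : V) : v ∈ Submodule.span R (b '' s) ↔ ∀ i ∉ s, b.repr v i = 0 := by
    rw [b.mem_span_image]
    simp [Set.subset_def, not_imp_comm]
  have hfU : Submodule.span R (b '' s) ∈ f.invtSubmodule := by
    rw [End.mem_invtSubmodule, Submodule.span_le]
    rintro _ ⟨j, hj, rfl⟩
    exact (mem_span _).2 fun i hi => by simpa [LinearMap.toMatrix_apply] using hzero i hi j hj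
  have hgU : Submodule.span R (b '' s) ∈ g.invtSubmodule := by
    rw [End.mem_invtSubmodule, Submodule.span_le]
    rintro _ ⟨j, hj, rfl⟩
    rw [SetLike.mem_coe, Submodule.mem_comap, hg]
    exact Submodule.smul_mem _ _ (Submodule.subset_span ⟨j, hj, rfl⟩)
  obtain ⟨j, hj⟩ := hs
  obtain ⟨i, hi⟩ := hsc
  obtain hU | hU := hirr _ hfU hgU
  · exact b.ne_zero j ((Submodule.mem_bot R).1 (hU ▸ Submodule.subset_span ⟨j, hj, rfl⟩))
  · exact hi ((b.self_mem_span_image).1 (hU ▸ Submodule.mem_top : b i ∈ _))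

theorem isIrreducibleTridiagonal_toMatrix {d : ℕ} {b : Basis (Fin (d + 1)) R V} {f g : End R V}
    {σ : Fin (d + 1) → R} (hg : ∀ i, g (b i) = σ i • b i)
    (hirr : ∀ U ∈ f.invtSubmodule, U ∈ g.invtSubmodule → U = ⊥ ∨ U = ⊤)
    (htri : IsTridiagonal (LinearMap.toMatrix b b f)) :
    IsIrreducibleTridiagonal (LinearMap.toMatrix b b f) where
  isTridiagonal := htri
  superdiag_ne_zero k := by
    obtain ⟨i, hi, j, hj, hij⟩ := exists_toMatrix_ne_zero_of_irreducible hg hirr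
      (s := Set.Ici k.succ) Set.nonempty_Ici ⟨k.castSucc, by simp⟩
    have near := mt (htri i j) hij
    simp only [Set.mem_Ici, Fin.le_def, Fin.val_succ] at hi hj
    obtain rfl : i = k.castSucc := Fin.ext (by rw [Fin.val_castSucc]; omega)
    obtain rfl : j = k.succ :=
      Fin.ext (by rw [Fin.val_succ]; rw [Fin.val_castSucc] at near; omega)
    exact hij
  subdiag_ne_zero k := by
    obtain ⟨i, hi, j, hj, hij⟩ := exists_toMatrix_ne_zero_of_irreducible hg hirr
      (s := Set.Iic k.castSucc) Set.nonempty_Iic ⟨k.succ, by simp⟩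
    have near := mt (htri i j) hij
    simp only [Set.mem_Iic, Fin.le_def, Fin.val_castSucc] at hi hj
    obtain rfl : i = k.succ := Fin.ext (by rw [Fin.val_succ]; omega)
    obtain rfl : j = k.castSucc :=
      Fin.ext (by rw [Fin.val_castSucc]; rw [Fin.val_succ] at near; omega)
    exact hij

end Nontrivial

end LinearAlgebra

namespace TSetup

variable (S : TSetup X)

lemma Estar_eq_diagonal (i : ℕ) :
    S.Estar i = Matrix.diagonal fun y => if S.G.dist S.x y = i then 1 else 0 := by
  ext y z
  rw [Matrix.diagonal_apply, ← ite_and]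
  by_cases hi : i ≤ S.D
  · exact S.hEstar i hi y z
  · have := S.hDiamLe S.x y
    rw [S.hEstarzero i (by omega), if_neg (by omega), Matrix.zero_apply]

lemma Astar_eq_diagonal : S.Astar = Matrix.diagonal ((Fintype.card X : ℂ) • S.E 1 S.x) := by
  ext y z
  rw [S.hAstar, Matrix.diagonal_apply, Pi.smul_apply, smul_eq_mul]

lemma orthogonalIdempotents_E : OrthogonalIdempotents S.E := by
  refine OrthogonalIdempotents.iff_mul_eq.2 fun i j => ?_
  by_cases hi : i ≤ S.D
  · by_cases hj : j ≤ S.D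
    · exact S.hEidem i j hi hj
    · rw [S.hEzero j (by omega), mul_zero, if_neg (by omega)]
  · rw [S.hEzero i (by omega), zero_mul, ite_self]

lemma orthogonalIdempotents_Estar : OrthogonalIdempotents S.Estar := by
  refine OrthogonalIdempotents.iff_mul_eq.2 fun i j => ?_
  rw [Estar_eq_diagonal, Estar_eq_diagonal, Matrix.diagonal_mul_diagonal]
  obtain rfl | hij := eq_or_ne i j
  · simp
  · rw [if_neg hij, ← Matrix.diagonal_zero]
    congr 1 with y
    by_cases hy : S.G.dist S.x y = i <;> simp [hy, hij]

lemma sum_Estar : ∑ i ∈ Finset.range (S.D + 1), S.Estar i = 1 := by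
  ext y z
  have := Nat.lt_succ_of_le (S.hDiamLe S.x y)
  obtain rfl | hyz := eq_or_ne y z <;> simp [Matrix.sum_apply, Estar_eq_diagonal, *]

lemma injOn_θ : Set.InjOn (fun i => (S.θ i : ℂ)) (Finset.range (S.D + 1)) :=
  fun i hi j hj hij => S.hθinj i j (Finset.mem_range_succ_iff.1 hi) (Finset.mem_range_succ_iff.1 hj)
    (Complex.ofReal_injective hij)

lemma injOn_θstar : Set.InjOn (fun i => (S.θstar i : ℂ)) (Finset.range (S.D + 1)) :=
  fun i hi j hj hij => S.hθstarinj i j (Finset.mem_range_succ_iff.1 hi)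
    (Finset.mem_range_succ_iff.1 hj) (Complex.ofReal_injective hij)

lemma A_mem_T : S.A ∈ S.T := Algebra.subset_adjoin (Set.mem_insert _ _)

lemma Astar_mem_T : S.Astar ∈ S.T := Algebra.subset_adjoin (Set.mem_insert_of_mem _ rfl)

lemma E_mem_T (i : ℕ) : S.E i ∈ S.T := by
  by_cases hi : i ∈ Finset.range (S.D + 1)
  · have := mem_adjoin_sum_smul_of_orthogonalIdempotents S.orthogonalIdempotents_E S.hEsum
      S.injOn_θ hi
    rw [← S.hAspec] at this
    exact Algebra.adjoin_mono (Set.singleton_subset_iff.2 (Set.mem_insert _ _)) this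
  · rw [S.hEzero i (by simpa using hi)]
    exact zero_mem _

lemma Estar_mem_T (i : ℕ) : S.Estar i ∈ S.T := by
  by_cases hi : i ∈ Finset.range (S.D + 1)
  · have := mem_adjoin_sum_smul_of_orthogonalIdempotents S.orthogonalIdempotents_Estar S.sum_Estar
      S.injOn_θstar hi
    rw [← S.hAstarspec] at this
    exact Algebra.adjoin_mono (Set.subset_insert _ _) this
  · rw [S.hEstarzero i (by simpa using hi)]
    exact zero_mem _

lemma A_mul_E (i : ℕ) : S.A * S.E i = (S.θ i : ℂ) • S.E i := by
  by_cases hi : i ∈ Finset.range (S.D + 1)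
  · rw [S.hAspec]
    exact sum_smul_mul_of_orthogonalIdempotents S.orthogonalIdempotents_E hi
  · rw [S.hEzero i (by simpa using hi), mul_zero, smul_zero]

lemma Astar_mul_Estar (i : ℕ) : S.Astar * S.Estar i = (S.θstar i : ℂ) • S.Estar i := by
  by_cases hi : i ∈ Finset.range (S.D + 1)
  · rw [S.hAstarspec]
    exact sum_smul_mul_of_orthogonalIdempotents S.orthogonalIdempotents_Estar hi
  · rw [S.hEstarzero i (by simpa using hi), mul_zero, smul_zero]

theorem Estar_mul_A_mul_Estar_eq_zero {i j : ℕ} (hij : i + 1 < j ∨ j + 1 < i) :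
    S.Estar i * S.A * S.Estar j = 0 := by
  ext y z
  rw [Estar_eq_diagonal, Estar_eq_diagonal, Matrix.mul_diagonal, Matrix.diagonal_mul, S.hA]
  by_cases hyz : S.G.Adj y z
  · have dist_le := S.hGconn.dist_triangle (u := S.x) (v := y) (w := z)
    have dist_le' := S.hGconn.dist_triangle (u := S.x) (v := z) (w := y)
    rw [SimpleGraph.dist_eq_one_iff_adj.2 hyz] at dist_le
    rw [SimpleGraph.dist_eq_one_iff_adj.2 hyz.symm] at dist_le'
    by_cases hy : S.G.dist S.x y = i
    · rw [if_neg (show S.G.dist S.x z ≠ j by omega), mul_zero, Matrix.zero_apply]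
    · rw [if_neg hy, zero_mul, zero_mul, Matrix.zero_apply]
  · rw [if_neg hyz, mul_zero, zero_mul, Matrix.zero_apply]

lemma E_mul_hadamard_E {h i j : ℕ} (hh : h ≤ S.D) (hi : i ≤ S.D) (hj : j ≤ S.D) :
    S.E h * (S.E i ⊙ S.E j) = ((Fintype.card X : ℂ)⁻¹ * S.q h i j) • S.E h := by
  rw [S.hKrein i j hi hj, mul_smul_comm, Finset.mul_sum]
  simp [S.orthogonalIdempotents_E.mul_eq, Nat.lt_succ_of_le hh, mul_smul]

lemma conjTranspose_E (i : ℕ) : (S.E i)ᴴ = S.E i := by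
  rw [Matrix.conjTranspose, S.hEsymm]
  exact S.hEreal i

lemma conjTranspose_Astar : S.Astarᴴ = S.Astar := by
  have star_E (y : X) : star (S.E 1 S.x y) = S.E 1 S.x y :=
    congrFun (congrFun (S.hEreal 1) S.x) y
  rw [Astar_eq_diagonal, Matrix.diagonal_conjTranspose]
  congr 1 with y
  simp [star_E]

/-- `tr(A* E_i A* E_j)` is a quadratic form in the entrywise product `E_i ∘ E_j`, evaluated at the
vector of diagonal entries of `A*`. -/
lemma trace_Astar_mul_E_mul_Astar_mul_E_eq_zero {i j : ℕ} (hi : i ≤ S.D) (hj : j ≤ S.D)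
    (hij : i + 1 < j ∨ j + 1 < i) : (S.Astar * S.E i * (S.Astar * S.E j)).trace = 0 := by
  have hD := S.hD3
  have vecMul_hadamard : S.E 1 S.x ᵥ* (S.E i ⊙ S.E j) = 0 := by
    have mul_hadamard : S.E 1 * (S.E i ⊙ S.E j) = 0 := by
      rw [S.E_mul_hadamard_E (by omega) hi hj, S.hQpoly0 1 i j (by omega) hi hj (by omega)]
      simp
    exact congrFun mul_hadamard S.x
  have transpose_eq : S.Astar * S.E j = (S.E j * S.Astar)ᵀ := by
    rw [Matrix.transpose_mul, S.hEsymm, Astar_eq_diagonal, Matrix.diagonal_transpose]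
  rw [transpose_eq, Astar_eq_diagonal, ← Matrix.dotProduct_vecMul_hadamard, Matrix.smul_vecMul,
    vecMul_hadamard, smul_zero, zero_dotProduct]

open scoped ComplexOrder in
theorem E_mul_Astar_mul_E_eq_zero {i j : ℕ} (hij : i + 1 < j ∨ j + 1 < i) :
    S.E i * S.Astar * S.E j = 0 := by
  by_cases hi : i ≤ S.D
  swap
  · rw [S.hEzero i (by omega), zero_mul, zero_mul]
  by_cases hj : j ≤ S.D
  swap
  · rw [S.hEzero j (by omega), mul_zero]
  rw [← Matrix.trace_mul_conjTranspose_self_eq_zero_iff]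
  have idem (k : ℕ) : S.E k * S.E k = S.E k := S.orthogonalIdempotents_E.idem k
  calc (S.E i * S.Astar * S.E j * (S.E i * S.Astar * S.E j)ᴴ).trace
      = (S.E i * (S.Astar * (S.E j * S.E j) * S.Astar * S.E i)).trace := by
        simp only [Matrix.conjTranspose_mul, conjTranspose_E, conjTranspose_Astar,
          Matrix.mul_assoc]
    _ = (S.Astar * S.E j * (S.Astar * (S.E i * S.E i))).trace := by
        rw [Matrix.trace_mul_comm, idem]
        simp only [Matrix.mul_assoc]
    _ = 0 := by rw [idem, S.trace_Astar_mul_E_mul_Astar_mul_E_eq_zero hj hi hij.symm]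

lemma mulVec_mem_of_mem_T {U : Submodule ℂ (X → ℂ)} (hA : ∀ u ∈ U, S.A *ᵥ u ∈ U)
    (hAstar : ∀ u ∈ U, S.Astar *ᵥ u ∈ U) {B : Matrix X X ℂ} (hB : B ∈ S.T) :
    ∀ u ∈ U, B *ᵥ u ∈ U := by
  induction hB using Algebra.adjoin_induction with
  | mem B hB =>
    obtain rfl | rfl := hB
    exacts [hA, hAstar]
  | algebraMap c =>
    intro u hu
    rw [Algebra.algebraMap_eq_smul_one, Matrix.smul_mulVec, Matrix.one_mulVec]
    exact U.smul_mem c hu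
  | add B C _ _ hB hC => exact fun u hu => Matrix.add_mulVec B C u ▸ U.add_mem (hB u hu) (hC u hu)
  | mul B C _ _ hB hC => exact fun u hu => Matrix.mulVec_mulVec u B C ▸ hB _ (hC u hu)

end TSetup

namespace TMod

open Module

variable {S : TSetup X} (M : TMod S)

section Action

variable {B C : Matrix X X ℂ}

lemma coe_actW_apply (hB : B ∈ S.T) (w : M.W) : (actW S M B w : X → ℂ) = B *ᵥ w := by
  have h : ∀ w ∈ M.W, B.mulVecLin w ∈ M.W := M.hWinv B hB
  rw [actW, dif_pos h]
  rfl

lemma actW_zero : actW S M 0 = 0 := by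
  ext1 w
  exact Subtype.ext ((M.coe_actW_apply (zero_mem _) w).trans (Matrix.zero_mulVec _))

lemma actW_one : actW S M 1 = 1 := by
  ext1 w
  exact Subtype.ext ((M.coe_actW_apply (one_mem _) w).trans (Matrix.one_mulVec _))

lemma actW_mul (hB : B ∈ S.T) (hC : C ∈ S.T) :
    actW S M (B * C) = actW S M B * actW S M C := by
  ext1 w
  refine Subtype.ext ((M.coe_actW_apply (mul_mem hB hC) w).trans ?_)
  rw [End.mul_apply, M.coe_actW_apply hB, M.coe_actW_apply hC, Matrix.mulVec_mulVec]

lemma actW_smul (c : ℂ) (hB : B ∈ S.T) : actW S M (c • B) = c • actW S M B := by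
  ext1 w
  refine Subtype.ext ((M.coe_actW_apply (S.T.smul_mem hB c) w).trans ?_)
  rw [LinearMap.smul_apply, Submodule.coe_smul, M.coe_actW_apply hB, Matrix.smul_mulVec]

lemma actW_sum {ι : Type*} (s : Finset ι) {B : ι → Matrix X X ℂ} (hB : ∀ i, B i ∈ S.T) :
    actW S M (∑ i ∈ s, B i) = ∑ i ∈ s, actW S M (B i) := by
  ext1 w
  refine Subtype.ext ((M.coe_actW_apply (sum_mem fun i _ => hB i) w).trans ?_)
  simp [Matrix.sum_mulVec, M.coe_actW_apply (hB _)]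

lemma map_subtype_range_actW (hB : B ∈ S.T) :
    (LinearMap.range (actW S M B)).map M.W.subtype = M.W.map B.mulVecLin := by
  have subtype_comp_actW : M.W.subtype ∘ₗ actW S M B = B.mulVecLin ∘ₗ M.W.subtype :=
    LinearMap.ext (M.coe_actW_apply hB)
  rw [← LinearMap.range_comp, subtype_comp_actW, LinearMap.range_comp, Submodule.range_subtype]

lemma actW_eq_zero_iff (hB : B ∈ S.T) : actW S M B = 0 ↔ M.W.map B.mulVecLin = ⊥ := by
  rw [← LinearMap.range_eq_bot, ← M.map_subtype_range_actW hB, ← Submodule.map_bot M.W.subtype,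
    (Submodule.map_injective_of_injective M.W.subtype_injective).eq_iff]

lemma rank_actW_Estar_le_one (i : ℕ) : (actW S M (S.Estar i)).rank ≤ 1 := by
  rw [LinearMap.rank, ← finrank_eq_rank, Nat.cast_le_one,
    ← Submodule.finrank_map_subtype_eq, M.map_subtype_range_actW (S.Estar_mem_T i)]
  exact M.hthin i

lemma orthogonalIdempotents_actW {ι : Type*} {e : ι → Matrix X X ℂ}
    (he : OrthogonalIdempotents e) (hT : ∀ i, e i ∈ S.T) :
    OrthogonalIdempotents fun i => actW S M (e i) := by
  classical
  refine OrthogonalIdempotents.iff_mul_eq.2 fun i j => ?_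
  rw [← M.actW_mul (hT i) (hT j), he.mul_eq, apply_ite (actW S M), actW_zero]

lemma eq_bot_or_eq_top_of_mem_invtSubmodule (U : Submodule ℂ M.W)
    (hA : U ∈ End.invtSubmodule (actW S M S.A))
    (hAstar : U ∈ End.invtSubmodule (actW S M S.Astar)) : U = ⊥ ∨ U = ⊤ := by
  have mulVec_mem {B : Matrix X X ℂ} (hB : B ∈ S.T) (hU : U ∈ End.invtSubmodule (actW S M B)) :
      ∀ u ∈ U.map M.W.subtype, B *ᵥ u ∈ U.map M.W.subtype := by
    rintro _ ⟨u, hu, rfl⟩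
    exact ⟨actW S M B u, hU hu, M.coe_actW_apply hB u⟩
  have map_injective := Submodule.map_injective_of_injective M.W.subtype_injective
  obtain hU | hU := M.hWirr (U.map M.W.subtype) (Submodule.map_subtype_le _ _) fun B hB =>
    TSetup.mulVec_mem_of_mem_T S (mulVec_mem S.A_mem_T hA) (mulVec_mem S.Astar_mem_T hAstar) hB
  · exact Or.inl (map_injective (hU.trans (Submodule.map_bot _).symm))
  · exact Or.inr (map_injective (hU.trans (Submodule.map_subtype_top _).symm))

end Action

section LeonardSystem

lemma actW_Estar_ne_zero_iff (i : ℕ) : actW S M (S.Estar i) ≠ 0 ↔ M.r ≤ i ∧ i ≤ M.r + M.d :=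
  (M.actW_eq_zero_iff (S.Estar_mem_T i)).not.trans (M.hr i)

lemma actW_E_ne_zero_iff (i : ℕ) : actW S M (S.E i) ≠ 0 ↔ M.t ≤ i ∧ i ≤ M.t + M.d :=
  (M.actW_eq_zero_iff (S.E_mem_T i)).not.trans (M.ht i)

lemma finrank_W_le : finrank ℂ M.W ≤ M.d + 1 := by
  have sum_filter : ∑ i ∈ Finset.range (S.D + 1) with actW S M (S.Estar i) ≠ 0,
      actW S M (S.Estar i) = 1 := by
    rw [Finset.sum_filter_ne_zero, ← M.actW_sum _ S.Estar_mem_T, S.sum_Estar, actW_one]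
  calc finrank ℂ M.W
      ≤ (Finset.range (S.D + 1) |>.filter fun i => actW S M (S.Estar i) ≠ 0).card :=
        finrank_le_card_of_sum_eq_one sum_filter fun i _ => M.rank_actW_Estar_le_one i
    _ ≤ (Finset.Icc M.r (M.r + M.d)).card := Finset.card_le_card fun i hi =>
        Finset.mem_Icc.2 ((M.actW_Estar_ne_zero_iff i).1 (Finset.mem_filter.1 hi).2)
    _ = M.d + 1 := by rw [Nat.card_Icc]; omega

lemma exists_basis_actW_eq_coordProj {e : ℕ → Matrix X X ℂ} (he : OrthogonalIdempotents e)
    (hT : ∀ i, e i ∈ S.T) {s : ℕ} (hne : ∀ i ≤ M.d, actW S M (e (s + i)) ≠ 0) :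
    ∃ b : Basis (Fin (M.d + 1)) ℂ M.W,
      ∀ i : Fin (M.d + 1), actW S M (e (s + i)) = coordProj b i :=
  exists_basis_eq_coordProj
    ((M.orthogonalIdempotents_actW he hT).embedding
      ((Fin.valEmbedding).trans (addLeftEmbedding s)))
    (fun i => hne i i.is_le) (M.finrank_W_le.trans_eq (Fintype.card_fin _).symm)

lemma exists_basis_actW_Estar : ∃ b : Basis (Fin (M.d + 1)) ℂ M.W,
    ∀ i : Fin (M.d + 1), actW S M (S.Estar (M.r + i)) = coordProj b i :=
  M.exists_basis_actW_eq_coordProj S.orthogonalIdempotents_Estar S.Estar_mem_T fun i hi =>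
    (M.actW_Estar_ne_zero_iff _).2 (by omega)

lemma exists_basis_actW_E : ∃ b : Basis (Fin (M.d + 1)) ℂ M.W,
    ∀ h : Fin (M.d + 1), actW S M (S.E (M.t + h)) = coordProj b h :=
  M.exists_basis_actW_eq_coordProj S.orthogonalIdempotents_E S.E_mem_T fun i hi =>
    (M.actW_E_ne_zero_iff _).2 (by omega)

/-- A basis of `W` whose `i`-th vector spans `E*_{r+i} W`. -/
def basisEstar : Basis (Fin (M.d + 1)) ℂ M.W := M.exists_basis_actW_Estar.choose

/-- A basis of `W` whose `h`-th vector spans `E_{t+h} W`. -/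
def basisE : Basis (Fin (M.d + 1)) ℂ M.W := M.exists_basis_actW_E.choose

lemma actW_Estar (i : Fin (M.d + 1)) :
    actW S M (S.Estar (M.r + i)) = coordProj M.basisEstar i :=
  M.exists_basis_actW_Estar.choose_spec i

lemma actW_E (h : Fin (M.d + 1)) : actW S M (S.E (M.t + h)) = coordProj M.basisE h :=
  M.exists_basis_actW_E.choose_spec h

lemma actW_A_basisE (h : Fin (M.d + 1)) :
    actW S M S.A (M.basisE h) = (S.θ (M.t + h) : ℂ) • M.basisE h := by
  apply apply_basis_eq_smul_of_mul_coordProj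
  rw [← actW_E, ← M.actW_mul S.A_mem_T (S.E_mem_T _), S.A_mul_E, M.actW_smul _ (S.E_mem_T _)]

lemma actW_Astar_basisEstar (i : Fin (M.d + 1)) :
    actW S M S.Astar (M.basisEstar i) = (S.θstar (M.r + i) : ℂ) • M.basisEstar i := by
  apply apply_basis_eq_smul_of_mul_coordProj
  rw [← actW_Estar, ← M.actW_mul S.Astar_mem_T (S.Estar_mem_T _), S.Astar_mul_Estar,
    M.actW_smul _ (S.Estar_mem_T _)]

lemma isTridiagonal_toMatrix_actW_A :
    IsTridiagonal (LinearMap.toMatrix M.basisEstar M.basisEstar (actW S M S.A)) := by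
  intro i j hij
  apply toMatrix_apply_eq_zero_of_coordProj_mul
  rw [← actW_Estar, ← actW_Estar, ← M.actW_mul (S.Estar_mem_T _) S.A_mem_T,
    ← M.actW_mul (mul_mem (S.Estar_mem_T _) S.A_mem_T) (S.Estar_mem_T _),
    S.Estar_mul_A_mul_Estar_eq_zero (by omega), actW_zero]

lemma isTridiagonal_toMatrix_actW_Astar :
    IsTridiagonal (LinearMap.toMatrix M.basisE M.basisE (actW S M S.Astar)) := by
  intro i j hij
  apply toMatrix_apply_eq_zero_of_coordProj_mul
  rw [← actW_E, ← actW_E, ← M.actW_mul (S.E_mem_T _) S.Astar_mem_T,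
    ← M.actW_mul (mul_mem (S.E_mem_T _) S.Astar_mem_T) (S.E_mem_T _),
    S.E_mul_Astar_mul_E_eq_zero (by omega), actW_zero]

/-- The Leonard system that `A` and `A*` induce on the thin irreducible module `W`. -/
def leonardSystem : LeonardSystem ℂ M.W M.d where
  A := actW S M S.A
  Astar := actW S M S.Astar
  basisE := M.basisE
  basisEstar := M.basisEstar
  θ h := S.θ (M.t + h)
  θstar i := S.θstar (M.r + i)
  A_basisE := M.actW_A_basisE
  Astar_basisEstar := M.actW_Astar_basisEstar
  toMatrix_A := isIrreducibleTridiagonal_toMatrix M.actW_Astar_basisEstar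
    M.eq_bot_or_eq_top_of_mem_invtSubmodule M.isTridiagonal_toMatrix_actW_A
  toMatrix_Astar := isIrreducibleTridiagonal_toMatrix M.actW_A_basisE
    (fun U hAstar hA => M.eq_bot_or_eq_top_of_mem_invtSubmodule U hA hAstar)
    M.isTridiagonal_toMatrix_actW_Astar

lemma leonardSystem_E (h : Fin (M.d + 1)) : M.leonardSystem.E h = actW S M (S.E (M.t + h)) :=
  (M.actW_E h).symm

lemma leonardSystem_Estar (i : Fin (M.d + 1)) :
    M.leonardSystem.Estar i = actW S M (S.Estar (M.r + i)) :=
  (M.actW_Estar i).symm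

lemma leonardSystem_a (i : Fin (M.d + 1)) : M.leonardSystem.a i = aW S M i := by
  rw [LeonardSystem.a, leonardSystem_Estar, aW, trW, M.actW_mul (S.Estar_mem_T _) S.A_mem_T]
  rfl

lemma leonardSystem_x (k : Fin M.d) : M.leonardSystem.x k = xW S M (k + 1) := by
  have hE := S.Estar_mem_T
  have hA := S.A_mem_T
  rw [xW, if_neg k.val.succ_ne_zero, trW, M.actW_mul (mul_mem (mul_mem (hE _) hA) (hE _)) hA,
    M.actW_mul (mul_mem (hE _) hA) (hE _), M.actW_mul (hE _) hA, LeonardSystem.x,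
    leonardSystem_Estar, leonardSystem_Estar]
  rfl

lemma leonardSystem_ν : M.leonardSystem.ν = nuW S M := by
  rw [LeonardSystem.ν, leonardSystem_E, leonardSystem_Estar,
    ← M.actW_mul (S.E_mem_T _) (S.Estar_mem_T _)]
  rfl

lemma leonardSystem_k (i : Fin (M.d + 1)) : M.leonardSystem.k i = kW S M i := by
  rw [LeonardSystem.k, leonardSystem_ν, leonardSystem_E, leonardSystem_Estar,
    ← M.actW_mul (S.Estar_mem_T _) (S.E_mem_T _)]
  rfl

lemma leonardSystem_kstar (h : Fin (M.d + 1)) : M.leonardSystem.kstar h = kstarW S M h := by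
  rw [LeonardSystem.kstar, leonardSystem_ν, leonardSystem_E, leonardSystem_Estar,
    ← M.actW_mul (S.E_mem_T _) (S.Estar_mem_T _)]
  rfl

lemma pW_eq_threeTermPoly (n : ℕ) : pW S M n = threeTermPoly (aW S M) (xW S M) n := by
  induction n using Nat.twoStepInduction with
  | zero => rfl
  | one => rfl
  | more n ih₀ ih₁ => rw [pW, threeTermPoly, ih₀, ih₁]

end LeonardSystem

end TMod

/-- Orthogonality relations for the polynomials `u_i = p_i / p_i(θ_t)`:
`Σ_h u_i(θ_{t+h}) u_j(θ_{t+h}) k*_h(W) = δ_{ij} ν(W) k_i(W)⁻¹` and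
`Σ_h u_h(θ_{t+i}) u_h(θ_{t+j}) k_h(W) = δ_{ij} ν(W) k*_i(W)⁻¹`. -/
theorem stmt17 (S : TSetup X) (M : TMod S) (hd : 0 < M.d) :
    ∀ i ≤ M.d, ∀ j ≤ M.d,
      (∑ h ∈ Finset.range (M.d + 1),
          ((pW S M i).eval ((S.θ (M.t + h) : ℂ)) / (pW S M i).eval ((S.θ M.t : ℂ)))
            * ((pW S M j).eval ((S.θ (M.t + h) : ℂ)) / (pW S M j).eval ((S.θ M.t : ℂ)))
            * kstarW S M h) =
        (if i = j then 1 else 0) * nuW S M * (kW S M i)⁻¹ ∧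
      (∑ h ∈ Finset.range (M.d + 1),
          ((pW S M h).eval ((S.θ (M.t + i) : ℂ)) / (pW S M h).eval ((S.θ M.t : ℂ)))
            * ((pW S M h).eval ((S.θ (M.t + j) : ℂ)) / (pW S M h).eval ((S.θ M.t : ℂ)))
            * kW S M h) =
        (if i = j then 1 else 0) * nuW S M * (kstarW S M i)⁻¹ := by
  intro i hi j hj
  lift i to Fin (M.d + 1) using Nat.lt_succ_of_le hi
  lift j to Fin (M.d + 1) using Nat.lt_succ_of_le hj
  have ha (i : Fin (M.d + 1)) : aW S M i = M.leonardSystem.a i := (M.leonardSystem_a i).symm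
  have hx (k : Fin M.d) : xW S M (k + 1) = M.leonardSystem.x k := (M.leonardSystem_x k).symm
  simp only [Finset.sum_range, M.pW_eq_threeTermPoly, ← M.leonardSystem_k, ← M.leonardSystem_kstar,
    ← M.leonardSystem_ν, Fin.val_inj]
  exact ⟨LeonardSystem.sum_eval_threeTermPoly_mul_kstar ha hx i j,
    LeonardSystem.sum_eval_threeTermPoly_mul_k ha hx i j⟩
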